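/- arXiv:2403.01018 — 6 statements merged into one kernel-verified Lean document; each statement's English description precedes it below -/
import Mathlib

section
/- For any two unitary matrices U, V acting on ℂ^{d_A} ⊗ ℂ^{d_B}, the product extent is submultiplicative under matrix multiplication: ξ(UV) ≤ ξ(U) · ξ(V). -/
/-!
Multiplying a decomposition of `U` with coefficients `c` by a decomposition of `V` with
coefficients `d` yields a decomposition of `U * V` whose coefficients are the products `c i * d j`,
since `(A ⊗ B)(A' ⊗ B') = AA' ⊗ BB'`. Both norms are multiplicative on such product vectors. Writing
`a = ‖c‖₁²`, `A = ‖c‖₂²`, `b = ‖d‖₁²`, `B = ‖d‖₂²`, the identity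
`(2a - A)(2b - B) - (2ab - AB) = 2(a - A)(b - B)` together with `A ≤ a` and `B ≤ b` shows that the
value of the new decomposition is at most the product of the two given ones
(`exists_mem_productExtentSet_mul`). Taking infima gives the claim.

As `sInf ∅ = 0`, taking infima requires that every matrix has a decomposition
(`productExtentSet_nonempty`). This holds because the unitaries span the matrix algebra over `ℂ`,
so that their Kronecker products span the matrices on the tensor product, and because the phase of
a complex coefficient can be absorbed into one of the unitaries.
-/

open Matrix Kronecker Finset

/-- The set of values `2‖c‖₁² − ‖c‖₂²` over all finite decompositions
`U = Σ_j c_j V_j ⊗ W_j` into Kronecker products of unitaries. -/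
def productExtentSet (dA dB : ℕ) (U : Matrix (Fin dA × Fin dB) (Fin dA × Fin dB) ℂ) :
    Set ℝ :=
  {x | ∃ (m : ℕ) (c : Fin m → ℝ)
      (V : Fin m → Matrix.unitaryGroup (Fin dA) ℂ)
      (W : Fin m → Matrix.unitaryGroup (Fin dB) ℂ),
      0 < m ∧
      U = ∑ j, (c j : ℂ) • ((V j : Matrix (Fin dA) (Fin dA) ℂ) ⊗ₖ
        (W j : Matrix (Fin dB) (Fin dB) ℂ)) ∧
      x = 2 * (∑ j, |c j|) ^ 2 - ∑ j, (c j) ^ 2}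

/-- The product extent `ξ(U)` of a bipartite unitary. -/
noncomputable def productExtent (dA dB : ℕ)
    (U : Matrix (Fin dA × Fin dB) (Fin dA × Fin dB) ℂ) : ℝ :=
  sInf (productExtentSet dA dB U)

/-- The `ℓ²` norm of a vector is at most its `ℓ¹` norm. -/
lemma sum_sq_le_sum_abs_sq {m : ℕ} (c : Fin m → ℝ) : ∑ j, c j ^ 2 ≤ (∑ j, |c j|) ^ 2 := by
  simpa only [sq_abs] using
    Finset.sum_sq_le_sq_sum_of_nonneg (s := Finset.univ) (f := fun j => |c j|)
      (fun j _ => abs_nonneg (c j))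

lemma productExtentSet_nonneg {dA dB : ℕ} {U : Matrix (Fin dA × Fin dB) (Fin dA × Fin dB) ℂ}
    {x : ℝ} (hx : x ∈ productExtentSet dA dB U) : 0 ≤ x := by
  obtain ⟨m, c, V, W, -, -, rfl⟩ := hx
  nlinarith [sum_sq_le_sum_abs_sq c, sq_nonneg (∑ j, |c j|)]

open scoped Matrix.Norms.L2Operator in
/-- The unitaries span the matrix algebra, which is a C⋆-algebra for the `ℓ²` operator norm. -/
lemma span_unitaryGroup (d : ℕ) :
    Submodule.span ℂ (Matrix.unitaryGroup (Fin d) ℂ : Set (Matrix (Fin d) (Fin d) ℂ)) = ⊤ :=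
  CStarAlgebra.span_unitary _

lemma span_kronecker_unitaryGroup (dA dB : ℕ) :
    Submodule.span ℂ (Set.image2 (fun A B => A ⊗ₖ B)
      (Matrix.unitaryGroup (Fin dA) ℂ : Set (Matrix (Fin dA) (Fin dA) ℂ))
      (Matrix.unitaryGroup (Fin dB) ℂ : Set (Matrix (Fin dB) (Fin dB) ℂ))) = ⊤ := by
  have h := Submodule.map₂_span_span ℂ
    (Matrix.kroneckerBilinear (R := ℂ) (α := ℂ)
      (l := Fin dA) (m := Fin dA) (n := Fin dB) (p := Fin dB))
    (Matrix.unitaryGroup (Fin dA) ℂ : Set (Matrix (Fin dA) (Fin dA) ℂ))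
    (Matrix.unitaryGroup (Fin dB) ℂ : Set (Matrix (Fin dB) (Fin dB) ℂ))
  rw [span_unitaryGroup, span_unitaryGroup] at h
  refine Eq.trans h.symm (Submodule.eq_top_iff'.2 fun M => ?_)
  rw [Matrix.matrix_eq_sum_single M]
  refine Submodule.sum_mem _ fun i _ => Submodule.sum_mem _ fun j _ => ?_
  -- An elementary matrix on the tensor product is a Kronecker product of elementary matrices.
  have hs : Matrix.single i j (M i j) =
      Matrix.single i.1 j.1 (M i j) ⊗ₖ Matrix.single i.2 j.2 (1 : ℂ) := by
    rw [Matrix.single_kronecker_single, mul_one]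
  rw [hs]
  exact Submodule.apply_mem_map₂ _ (Submodule.mem_top (x := Matrix.single i.1 j.1 (M i j)))
    (Submodule.mem_top (x := Matrix.single i.2 j.2 (1 : ℂ)))

lemma exp_smul_mem_unitaryGroup {d : ℕ} (t : ℝ) {A : Matrix (Fin d) (Fin d) ℂ}
    (hA : A ∈ Matrix.unitaryGroup (Fin d) ℂ) :
    Complex.exp (t * Complex.I) • A ∈ Matrix.unitaryGroup (Fin d) ℂ := by
  rw [Matrix.mem_unitaryGroup_iff] at hA ⊢
  rw [star_smul, smul_mul_smul_comm, hA]
  have h : Complex.exp (t * Complex.I) * star (Complex.exp (t * Complex.I)) = 1 := by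
    rw [Complex.star_def, Complex.mul_conj, Complex.normSq_eq_norm_sq,
      Complex.norm_exp_ofReal_mul_I]
    simp
  rw [h, one_smul]

lemma productExtentSet_nonempty (dA dB : ℕ)
    (U : Matrix (Fin dA × Fin dB) (Fin dA × Fin dB) ℂ) :
    (productExtentSet dA dB U).Nonempty := by
  have hU := Submodule.mem_top (R := ℂ) (x := U)
  rw [← span_kronecker_unitaryGroup, Submodule.mem_span_set'] at hU
  obtain ⟨n, z, g, rfl⟩ := hU
  choose V hV W hW hg using fun j => (g j).2
  -- The extra summand with coefficient `0` makes the number of terms positive.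
  refine ⟨_, n + 1, Fin.cons 0 fun j => ‖z j‖,
    Fin.cons 1 fun j => ⟨_, exp_smul_mem_unitaryGroup (Complex.arg (z j)) (hV j)⟩,
    Fin.cons 1 fun j => ⟨W j, hW j⟩, n.succ_pos, ?_, rfl⟩
  rw [Fin.sum_univ_succ]
  simp only [Fin.cons_zero, Fin.cons_succ, Complex.ofReal_zero, zero_smul, zero_add]
  refine Finset.sum_congr rfl fun j _ => ?_
  rw [Matrix.smul_kronecker, smul_smul, Complex.norm_mul_exp_arg_mul_I]
  exact congrArg _ (hg j).symm

lemma exists_mem_productExtentSet_mul {dA dB : ℕ}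
    {U V : Matrix (Fin dA × Fin dB) (Fin dA × Fin dB) ℂ} {x y : ℝ}
    (hx : x ∈ productExtentSet dA dB U) (hy : y ∈ productExtentSet dA dB V) :
    ∃ w ∈ productExtentSet dA dB (U * V), w ≤ x * y := by
  obtain ⟨m, c, A, B, hm, rfl, rfl⟩ := hx
  obtain ⟨n, d, A', B', hn, rfl, rfl⟩ := hy
  let e : Fin (m * n) ≃ Fin m × Fin n := finProdFinEquiv.symm
  refine ⟨_, ⟨m * n, fun k => c (e k).1 * d (e k).2, fun k => A (e k).1 * A' (e k).2,
    fun k => B (e k).1 * B' (e k).2, Nat.mul_pos hm hn, ?_, rfl⟩, ?_⟩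
  · rw [Equiv.sum_comp e (fun p : Fin m × Fin n => ((c p.1 * d p.2 : ℝ) : ℂ) •
      (((A p.1 * A' p.2 : Matrix.unitaryGroup (Fin dA) ℂ) : Matrix (Fin dA) (Fin dA) ℂ) ⊗ₖ
        ((B p.1 * B' p.2 : Matrix.unitaryGroup (Fin dB) ℂ) : Matrix (Fin dB) (Fin dB) ℂ))),
      Finset.sum_mul_sum, ← Finset.sum_product', Finset.univ_product_univ]
    refine Finset.sum_congr rfl fun p _ => ?_
    rw [smul_mul_smul_comm, ← Matrix.mul_kronecker_mul, Complex.ofReal_mul]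
    rfl
  · have h1 : ∑ k, |c (e k).1 * d (e k).2| = (∑ i, |c i|) * ∑ j, |d j| := by
      rw [Equiv.sum_comp e (fun p : Fin m × Fin n => |c p.1 * d p.2|),
        Finset.sum_mul_sum, ← Finset.sum_product', Finset.univ_product_univ]
      simp only [abs_mul]
    have h2 : ∑ k, (c (e k).1 * d (e k).2) ^ 2 = (∑ i, c i ^ 2) * ∑ j, d j ^ 2 := by
      rw [Equiv.sum_comp e (fun p : Fin m × Fin n => (c p.1 * d p.2) ^ 2),
        Finset.sum_mul_sum, ← Finset.sum_product', Finset.univ_product_univ]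
      simp only [mul_pow]
    rw [h1, h2]
    nlinarith [mul_nonneg (sub_nonneg.2 (sum_sq_le_sum_abs_sq c))
      (sub_nonneg.2 (sum_sq_le_sum_abs_sq d))]

/-- A bound `a ≤ x * y` on all products passes to the product of the infima. -/
lemma le_sInf_mul_sInf {S T : Set ℝ} (hS : S.Nonempty) (hT : T.Nonempty)
    (hS0 : ∀ x ∈ S, 0 ≤ x) (hT0 : ∀ y ∈ T, 0 ≤ y) {a : ℝ}
    (h : ∀ x ∈ S, ∀ y ∈ T, a ≤ x * y) : a ≤ sInf S * sInf T := by
  rw [mul_comm, ← smul_eq_mul, ← Real.sInf_smul_of_nonneg (Real.sInf_nonneg hT0)]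
  refine le_csInf hS.smul_set ?_
  rintro _ ⟨x, hx, rfl⟩
  change a ≤ sInf T * x
  rw [mul_comm, ← smul_eq_mul, ← Real.sInf_smul_of_nonneg (hS0 x hx)]
  refine le_csInf hT.smul_set ?_
  rintro _ ⟨y, hy, rfl⟩
  exact h x hx y hy

/-- The product extent is submultiplicative:
`ξ(UV) ≤ ξ(U)·ξ(V)` for unitaries `U`, `V` on `ℂ^{d_A} ⊗ ℂ^{d_B}`. -/
theorem productExtent_submultiplicative (dA dB : ℕ) (hdA : 0 < dA) (hdB : 0 < dB)
    (U V : Matrix (Fin dA × Fin dB) (Fin dA × Fin dB) ℂ)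
    (hU : U ∈ Matrix.unitaryGroup (Fin dA × Fin dB) ℂ)
    (hV : V ∈ Matrix.unitaryGroup (Fin dA × Fin dB) ℂ) :
    productExtent dA dB (U * V) ≤ productExtent dA dB U * productExtent dA dB V := by
  refine le_sInf_mul_sInf (productExtentSet_nonempty dA dB U) (productExtentSet_nonempty dA dB V)
    (fun _ => productExtentSet_nonneg) (fun _ => productExtentSet_nonneg) fun x hx y hy => ?_
  obtain ⟨w, hw, hle⟩ := exists_mem_productExtentSet_mul hx hy
  exact (csInf_le ⟨0, fun _ => productExtentSet_nonneg⟩ hw).trans hle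
end

section
/- For any unitary matrix U on ℂ^{d_A} ⊗ ℂ^{d_B}, the product extent satisfies 1 ≤ ξ(U) ≤ 2 d_A² d_B² − 1. (In particular, for every decomposition U = Σ_j c_j V_j ⊗ W_j into products of unitaries, one has ‖c‖₁ ≥ 1 and hence 2‖c‖₁² − ‖c‖₂² ≥ 1; and there always exists a decomposition, obtained from the generalized Pauli basis, with 2‖c‖₁² − ‖c‖₂² ≤ 2 d_A² d_B² − 1.) -/
/-!
Lower bound: in the L2 operator norm every unitary has norm `1`, so the triangle inequality applied
to `U = Σ c_j V_j ⊗ W_j` gives `1 ≤ ‖c‖₁`; since `‖c‖₂ ≤ ‖c‖₁`, the cost is at least `‖c‖₁² ≥ 1`.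

Upper bound: the generalized Pauli (clock-and-shift) matrices `X^a Z^b` are `n²` unitaries that
satisfy the completeness relation `Σ_k conj (P_k)_{ij} (P_k)_{i'j'} = n δ_{ii'} δ_{jj'}`
(`exists_unitary_frame`). Expanding `U` in the products `P_k ⊗ Q_l`, this relation yields both the
reconstruction of `U` and the Parseval identity `Σ |a_{kl}|² = 1`. The phases of the `a_{kl}` are
absorbed into the unitaries (`mem_productExtentSet_of_complex`), and Cauchy–Schwarz over the
`N = d_A² d_B²` terms bounds the cost by `2 N - 1`.
-/

open Matrix Kronecker Finset

/-- Clock-and-shift unitaries: the completeness relation says that, after division by `√n`, the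
matrix with rows `k` and columns `(i, j)` is an isometry. -/
lemma exists_unitary_frame (n : ℕ) [NeZero n] :
    ∃ P : ZMod n × ZMod n → Matrix.unitaryGroup (Fin n) ℂ,
      ∀ i j i' j', ∑ k, star ((P k : Matrix (Fin n) (Fin n) ℂ) i j) *
        (P k : Matrix (Fin n) (Fin n) ℂ) i' j' = if i = i' ∧ j = j' then (n : ℂ) else 0 := by
  classical
  let e : Fin n ≃+* ZMod n := ZMod.finEquiv n
  have hstar : ∀ x : ZMod n, star (ZMod.stdAddChar x : ℂ) = ZMod.stdAddChar (-x) := by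
    intro x
    rw [AddChar.map_neg_eq_conj]; rfl
  let M : ZMod n × ZMod n → Matrix (Fin n) (Fin n) ℂ := fun k i j =>
    if e i = e j + k.1 then (ZMod.stdAddChar (k.2 * e j) : ℂ) else 0
  have hM : ∀ k, M k ∈ Matrix.unitaryGroup (Fin n) ℂ := by
    intro k
    rw [Matrix.mem_unitaryGroup_iff]
    ext i i'
    simp only [Matrix.mul_apply, Matrix.star_apply]
    rw [Finset.sum_eq_single (e.symm (e i - k.1))]
    · simp only [M, RingEquiv.apply_symm_apply, sub_add_cancel, if_true,
        Matrix.one_apply, EmbeddingLike.apply_eq_iff_eq]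
      by_cases h : i = i'
      · subst h
        simp only [if_true]
        rw [hstar, ← AddChar.map_add_eq_mul]
        simp
      · simp [h, Ne.symm h]
    · intro j _ hj
      have : ¬ e i = e j + k.1 := by
        intro h
        apply hj
        rw [h]; simp
      simp [M, this]
    · simp
  refine ⟨fun k => ⟨M k, hM k⟩, ?_⟩
  intro i j i' j'
  simp only [Fintype.sum_prod_type]
  rw [Finset.sum_eq_single (e i - e j)]
  · have h1 : ∀ b : ZMod n, star (M (e i - e j, b) i j) * M (e i - e j, b) i' j' =
        if e i' = e j' + (e i - e j) then
          (ZMod.stdAddChar (b * (e j' - e j)) : ℂ) else 0 := by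
      intro b
      simp only [M, add_sub_cancel, if_true]
      split_ifs with h
      · rw [hstar, ← AddChar.map_add_eq_mul]
        congr 1; ring
      · simp
    simp only [h1]
    by_cases hj : j = j'
    · subst hj
      by_cases hi : i = i'
      · subst hi
        simp [ZMod.card]
      · have : ¬ e i' = e i := fun h => hi (e.injective h).symm
        simp [hi, this]
    · have hne : e j' - e j ≠ 0 := fun h => hj (e.injective (sub_eq_zero.mp h)).symm
      split_ifs with h h2 h2
      · exact absurd h2.2 hj
      · rw [AddChar.sum_mulShift _ (ZMod.isPrimitive_stdAddChar n)]
        simp [hne]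
      · exact absurd h2.2 hj
      · simp
  · intro a _ ha
    have : ¬ e i = e j + a := by
      intro h
      apply ha
      rw [h]; simp
    simp [M, this]
  · simp

/-- A decomposition with complex coefficients over an arbitrary finite index type gives an
admissible one: phases are moved into the first tensor factor. -/
lemma mem_productExtentSet_of_complex {dA dB : ℕ}
    {U : Matrix (Fin dA × Fin dB) (Fin dA × Fin dB) ℂ} {κ : Type*} [Fintype κ] [Nonempty κ]
    (a : κ → ℂ) (V : κ → Matrix.unitaryGroup (Fin dA) ℂ) (W : κ → Matrix.unitaryGroup (Fin dB) ℂ)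
    (h : U = ∑ k, a k • ((V k : Matrix (Fin dA) (Fin dA) ℂ) ⊗ₖ
      (W k : Matrix (Fin dB) (Fin dB) ℂ))) :
    2 * (∑ k, ‖a k‖) ^ 2 - ∑ k, ‖a k‖ ^ 2 ∈ productExtentSet dA dB U := by
  have hphase : ∀ z : ℂ, ∃ u : ℂ, u * star u = 1 ∧ z = (‖z‖ : ℂ) * u := by
    intro z
    refine ⟨Complex.exp (Complex.arg z * Complex.I), ?_, (Complex.norm_mul_exp_arg_mul_I z).symm⟩
    have := Complex.mul_conj' (Complex.exp (Complex.arg z * Complex.I))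
    rw [Complex.norm_exp_ofReal_mul_I] at this
    simpa using this
  choose u hu hz using hphase
  have hV : ∀ k, u (a k) • (V k : Matrix (Fin dA) (Fin dA) ℂ) ∈ Matrix.unitaryGroup (Fin dA) ℂ := by
    intro k
    rw [Matrix.mem_unitaryGroup_iff, star_smul, smul_mul_smul_comm, hu, one_smul]
    exact Matrix.mem_unitaryGroup_iff.mp (V k).2
  let f := Fintype.equivFin κ
  refine ⟨Fintype.card κ, fun j => ‖a (f.symm j)‖, fun j => ⟨_, hV (f.symm j)⟩,
    fun j => W (f.symm j), Fintype.card_pos, ?_, ?_⟩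
  · rw [h, ← f.symm.sum_comp]
    refine Finset.sum_congr rfl fun j _ => ?_
    simp only
    rw [Matrix.smul_kronecker, smul_smul, ← hz]
  · simp only [abs_norm]
    rw [f.symm.sum_comp (fun k => ‖a k‖), f.symm.sum_comp (fun k => ‖a k‖ ^ 2)]

open scoped Matrix.Norms.L2Operator in
lemma one_le_of_mem_productExtentSet {dA dB : ℕ} (hdA : 0 < dA) (hdB : 0 < dB)
    {U : Matrix (Fin dA × Fin dB) (Fin dA × Fin dB) ℂ}
    (hU : U ∈ Matrix.unitaryGroup (Fin dA × Fin dB) ℂ) {x : ℝ}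
    (hx : x ∈ productExtentSet dA dB U) : 1 ≤ x := by
  obtain ⟨m, c, V, W, -, hdec, rfl⟩ := hx
  have : Nonempty (Fin dA × Fin dB) := ⟨(⟨0, hdA⟩, ⟨0, hdB⟩)⟩
  have h1 : (1 : ℝ) ≤ ∑ j, |c j| := by
    calc (1 : ℝ) = ‖U‖ := (CStarRing.norm_of_mem_unitary hU).symm
      _ ≤ ∑ j, ‖(c j : ℂ) • ((V j : Matrix (Fin dA) (Fin dA) ℂ) ⊗ₖ
            (W j : Matrix (Fin dB) (Fin dB) ℂ))‖ := by
          rw [hdec]; exact norm_sum_le _ _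
      _ = ∑ j, |c j| := by
          refine Finset.sum_congr rfl fun j _ => ?_
          rw [norm_smul, CStarRing.norm_of_mem_unitary
            (Matrix.kronecker_mem_unitary (V j).2 (W j).2), mul_one, Complex.norm_real,
            Real.norm_eq_abs]
  have h2 : ∑ j, (c j) ^ 2 ≤ (∑ j, |c j|) ^ 2 := by
    simpa using Finset.sum_sq_le_sq_sum_of_nonneg (s := Finset.univ) (f := fun j => |c j|)
      (fun j _ => abs_nonneg _)
  nlinarith

/-- Expansion in a product of frames satisfying the completeness relation, with the coefficients
`a_{kl} = (1 / (d_A d_B)) tr ((P_k ⊗ Q_l)ᴴ U)`. -/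
lemma exists_expansion {dA dB : ℕ} (hdA : 0 < dA) (hdB : 0 < dB)
    {U : Matrix (Fin dA × Fin dB) (Fin dA × Fin dB) ℂ}
    (hU : U ∈ Matrix.unitaryGroup (Fin dA × Fin dB) ℂ) {κ μ : Type*} [Fintype κ] [Fintype μ]
    (P : κ → Matrix (Fin dA) (Fin dA) ℂ) (Q : μ → Matrix (Fin dB) (Fin dB) ℂ)
    (hP : ∀ i j i' j', ∑ k, star (P k i j) * P k i' j' = if i = i' ∧ j = j' then (dA : ℂ) else 0)
    (hQ : ∀ i j i' j', ∑ k, star (Q k i j) * Q k i' j' = if i = i' ∧ j = j' then (dB : ℂ) else 0) :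
    ∃ a : κ × μ → ℂ, U = ∑ k, a k • (P k.1 ⊗ₖ Q k.2) ∧ ∑ k, ‖a k‖ ^ 2 = 1 := by
  have hA : (dA : ℂ) ≠ 0 := by exact_mod_cast hdA.ne'
  have hB : (dB : ℂ) ≠ 0 := by exact_mod_cast hdB.ne'
  let D : ℂ := dA * dB
  have hD : D ≠ 0 := mul_ne_zero hA hB
  let R : κ × μ → Matrix (Fin dA × Fin dB) (Fin dA × Fin dB) ℂ := fun k => P k.1 ⊗ₖ Q k.2
  have hR : ∀ x y x' y', ∑ k, star (R k x y) * R k x' y' =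
      if x = x' ∧ y = y' then D else 0 := by
    rintro ⟨x1, x2⟩ ⟨y1, y2⟩ ⟨x1', x2'⟩ ⟨y1', y2'⟩
    calc ∑ k, star (R k (x1, x2) (y1, y2)) * R k (x1', x2') (y1', y2')
        = (∑ k, star (P k x1 y1) * P k x1' y1') * ∑ l, star (Q l x2 y2) * Q l x2' y2' := by
          rw [Finset.sum_mul_sum, Fintype.sum_prod_type]
          refine Finset.sum_congr rfl fun k _ => Finset.sum_congr rfl fun l _ => ?_
          simp only [R, Matrix.kroneckerMap_apply, star_mul']
          ring
      _ = _ := by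
          rw [hP, hQ]
          simp only [Prod.mk.injEq, D]
          split_ifs <;> simp_all
  let a : κ × μ → ℂ := fun k => D⁻¹ * ∑ x, ∑ y, star (R k x y) * U x y
  have hrec : ∀ x' y', ∑ k, a k * R k x' y' = U x' y' := by
    intro x' y'
    calc ∑ k, a k * R k x' y'
        = D⁻¹ * ∑ x, ∑ y, (∑ k, star (R k x y) * R k x' y') * U x y := by
          simp only [a, Finset.mul_sum, Finset.sum_mul]
          rw [Finset.sum_comm]
          refine Finset.sum_congr rfl fun x _ => ?_
          rw [Finset.sum_comm]
          refine Finset.sum_congr rfl fun y _ => Finset.sum_congr rfl fun k _ => ?_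
          ring
      _ = U x' y' := by
          simp only [hR]
          rw [Finset.sum_eq_single x', Finset.sum_eq_single y']
          · simp [hD]
          · intro y _ hy; simp [hy]
          · simp
          · intro x _ hx; simp [hx]
          · simp
  have hUU : ∑ x, ∑ y, U x y * star (U x y) = D := by
    have h := congrArg Matrix.trace (Matrix.mem_unitaryGroup_iff.mp hU)
    simp only [Matrix.trace, Matrix.diag, Matrix.mul_apply, Matrix.star_apply] at h
    rw [h]
    simp [D]
  refine ⟨a, ?_, ?_⟩
  · ext x y
    rw [← hrec x y, Matrix.sum_apply]
    rfl
  · have hsum : ∑ k, a k * star (a k) = 1 := by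
      calc ∑ k, a k * star (a k)
          = D⁻¹ * ∑ x, ∑ y, (∑ k, a k * R k x y) * star (U x y) := by
            have hstarD : star D = D := by simp [D]
            have hs : ∀ k, star (a k) = D⁻¹ * ∑ x, ∑ y, R k x y * star (U x y) := by
              intro k
              simp only [a, star_mul', star_inv₀, hstarD, star_sum, star_star]
            simp only [hs, Finset.mul_sum, Finset.sum_mul]
            rw [Finset.sum_comm]
            refine Finset.sum_congr rfl fun x _ => ?_
            rw [Finset.sum_comm]
            refine Finset.sum_congr rfl fun y _ => Finset.sum_congr rfl fun k _ => ?_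
            ring
        _ = 1 := by
            simp only [hrec]
            rw [hUU, inv_mul_cancel₀ hD]
    have : ((∑ k, ‖a k‖ ^ 2 : ℝ) : ℂ) = 1 := by
      rw [← hsum]
      push_cast
      exact Finset.sum_congr rfl fun k _ => (Complex.mul_conj' (a k)).symm
    exact_mod_cast this

/-- For a bipartite unitary `U`, `1 ≤ ξ(U) ≤ 2 d_A² d_B² − 1`. -/
theorem productExtent_bounds (dA dB : ℕ) (hdA : 0 < dA) (hdB : 0 < dB)
    (U : Matrix (Fin dA × Fin dB) (Fin dA × Fin dB) ℂ)
    (hU : U ∈ Matrix.unitaryGroup (Fin dA × Fin dB) ℂ) :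
    1 ≤ productExtent dA dB U ∧
      productExtent dA dB U ≤ 2 * (dA : ℝ) ^ 2 * (dB : ℝ) ^ 2 - 1 := by
  have : NeZero dA := ⟨hdA.ne'⟩
  have : NeZero dB := ⟨hdB.ne'⟩
  obtain ⟨P, hP⟩ := exists_unitary_frame dA
  obtain ⟨Q, hQ⟩ := exists_unitary_frame dB
  obtain ⟨a, ha, hnorm⟩ := exists_expansion hdA hdB hU (fun k => (P k : Matrix _ _ ℂ))
    (fun k => (Q k : Matrix _ _ ℂ)) hP hQ
  have hmem := mem_productExtentSet_of_complex a (fun k => P k.1) (fun k => Q k.2) ha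
  have hlow : ∀ x ∈ productExtentSet dA dB U, 1 ≤ x :=
    fun x hx => one_le_of_mem_productExtentSet hdA hdB hU hx
  refine ⟨le_csInf ⟨_, hmem⟩ hlow, (csInf_le ⟨1, hlow⟩ hmem).trans ?_⟩
  have hcs := sq_sum_le_card_mul_sum_sq (s := Finset.univ) (f := fun k => ‖a k‖)
  rw [hnorm] at hcs ⊢
  simp only [Finset.card_univ, Fintype.card_prod, ZMod.card] at hcs
  push_cast at hcs
  nlinarith
end

section
/- Let U be a unitary on ℂ^{d_A} ⊗ ℂ^{d_B} with a decomposition U = Σ_{j=1}^m c_j V_j ⊗ W_j where c ∈ ℝ^m and each V_j, W_j is unitary. Then the Choi state J_U — the matrix indexed by pairs ((i,i'),(k,k')) ∈ (Fin d_A × Fin d_A) × (Fin d_B × Fin d_B) with entries J_U[((i,i'),(k,k')), ((j,j'),(l,l'))] = (1/(d_A d_B)) · U_{(i',k'),(i,k)} · conj(U_{(j',l'),(j,l)}) — admits a decomposition J_U = Σ_{s=1}^N a_s ρ_s ⊗ σ_s where each a_s ∈ ℝ, each ρ_s is a density matrix on ℂ^{d_A} ⊗ ℂ^{d_A}, each σ_s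 is a density matrix on ℂ^{d_B} ⊗ ℂ^{d_B} (the Kronecker product ρ_s ⊗ σ_s taken with respect to the index grouping ((i,i'),(k,k'))), and Σ_s |a_s| = 2‖c‖₁² − ‖c‖₂². -/
/-!
Write `v j` and `w j` for the normalized vectorizations of `V j` and `W j`; these are unit vectors
because `V j` and `W j` are unitary. With `A j k = |v j⟩⟨v k|` and `B j k = |w j⟩⟨w k|`, the Choi
state is `∑ j k, c j * c k * (A j k ⊗ B j k)` (`choiState_eq_sum`). Splitting `A j k = X + iY` and
`B j k = P + iQ` into Hermitian parts, the cross terms `X ⊗ Q + Y ⊗ P` are antisymmetric under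
`j ↔ k` and cancel, which leaves `∑ j k, c j * c k * (X ⊗ P - Y ⊗ Q)`.

By the polarization identity and the parallelogram law, each of `X, Y, P, Q` is a combination of
two density matrices with absolute coefficients summing to exactly `1`
(`isSignedMixture_hermPart`). An off-diagonal pair therefore contributes `2 |c j * c k|`,
whereas for `j = k` one has `Y = 0` and the contribution is `(c j) ^ 2`. The total is
`2 ‖c‖₁² - ‖c‖₂²`.
-/

open Matrix Kronecker Finset
open scoped ComplexOrder

/-- A density matrix: positive semidefinite with trace 1. -/
def IsDensityMatrix {n : Type*} [Fintype n] [DecidableEq n]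
    (ρ : Matrix n n ℂ) : Prop :=
  ρ.PosSemidef ∧ ρ.trace = 1

/-- The Choi state of a unitary `U` on `ℂ^{d_A} ⊗ ℂ^{d_B}`, indexed by
`((i,i'),(k,k'))` with `(i,k)` the input copies and `(i',k')` the output copies. -/
noncomputable def choiState (dA dB : ℕ)
    (U : Matrix (Fin dA × Fin dB) (Fin dA × Fin dB) ℂ) :
    Matrix ((Fin dA × Fin dA) × (Fin dB × Fin dB))
      ((Fin dA × Fin dA) × (Fin dB × Fin dB)) ℂ :=
  Matrix.of fun p q =>
    (1 / ((dA : ℂ) * (dB : ℂ))) *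
      (U (p.1.2, p.2.2) (p.1.1, p.2.1) * (starRingEnd ℂ) (U (q.1.2, q.2.2) (q.1.1, q.2.1)))

/-- `M` is a real combination of products of density matrices, with absolute coefficients summing
to exactly `r`. -/
def HasSepDecomp {n n' : Type} [Fintype n] [DecidableEq n] [Fintype n'] [DecidableEq n']
    (M : Matrix (n × n') (n × n') ℂ) (r : ℝ) : Prop :=
  ∃ (ι : Type) (_ : Fintype ι) (a : ι → ℝ) (ρ : ι → Matrix n n ℂ) (σ : ι → Matrix n' n' ℂ),
    (∀ s, IsDensityMatrix (ρ s)) ∧ (∀ s, IsDensityMatrix (σ s)) ∧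
      M = ∑ s, (a s : ℂ) • (ρ s ⊗ₖ σ s) ∧ ∑ s, |a s| = r

/-- `X` is a real combination of two density matrices, with absolute coefficients summing
to `1`. -/
def IsSignedMixture {n : Type} [Fintype n] [DecidableEq n] (X : Matrix n n ℂ) : Prop :=
  ∃ (a : Fin 2 → ℝ) (ρ : Fin 2 → Matrix n n ℂ),
    (∀ s, IsDensityMatrix (ρ s)) ∧ X = ∑ s, (a s : ℂ) • ρ s ∧ ∑ s, |a s| = 1

/-- The Hermitian part `(|u⟩⟨v| + |v⟩⟨u|) / 2` of `|u⟩⟨v|`. The skew part of `|u⟩⟨v|` is `i` times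
`hermPart (-i u) v`. -/
noncomputable def hermPart {n : Type} (u v : n → ℂ) : Matrix n n ℂ :=
  (1 / 2 : ℂ) • (vecMulVec u (star v) + vecMulVec v (star u))

section

set_option linter.unusedSectionVars false

variable {n n' : Type} [Fintype n] [DecidableEq n] [Fintype n'] [DecidableEq n']

lemma HasSepDecomp.zero : HasSepDecomp (0 : Matrix (n × n') (n × n') ℂ) 0 :=
  ⟨Empty, inferInstance, Empty.elim, fun s => s.elim, fun s => s.elim,
    fun s => s.elim, fun s => s.elim, by simp, by simp⟩

lemma HasSepDecomp.add {M M' : Matrix (n × n') (n × n') ℂ} {r r' : ℝ}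
    (h : HasSepDecomp M r) (h' : HasSepDecomp M' r') : HasSepDecomp (M + M') (r + r') := by
  obtain ⟨ι, _, a, ρ, σ, hρ, hσ, rfl, rfl⟩ := h
  obtain ⟨ι', _, a', ρ', σ', hρ', hσ', rfl, rfl⟩ := h'
  refine ⟨ι ⊕ ι', inferInstance, Sum.elim a a', Sum.elim ρ ρ', Sum.elim σ σ', ?_, ?_, ?_, ?_⟩
  · rintro (s | s)
    exacts [hρ s, hρ' s]
  · rintro (s | s)
    exacts [hσ s, hσ' s]
  · simp [Fintype.sum_sum_type]
  · simp [Fintype.sum_sum_type]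

lemma HasSepDecomp.smul {M : Matrix (n × n') (n × n') ℂ} {r : ℝ}
    (h : HasSepDecomp M r) (t : ℝ) : HasSepDecomp ((t : ℂ) • M) (|t| * r) := by
  obtain ⟨ι, _, a, ρ, σ, hρ, hσ, rfl, rfl⟩ := h
  refine ⟨ι, inferInstance, fun s => t * a s, ρ, σ, hρ, hσ, ?_, ?_⟩
  · simp only [Finset.smul_sum, smul_smul, Complex.ofReal_mul]
  · simp [Finset.mul_sum, abs_mul]

lemma HasSepDecomp.sum {κ : Type} (S : Finset κ) (M : κ → Matrix (n × n') (n × n') ℂ) (r : κ → ℝ)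
    (h : ∀ k, HasSepDecomp (M k) (r k)) : HasSepDecomp (∑ k ∈ S, M k) (∑ k ∈ S, r k) := by
  classical
  induction S using Finset.induction_on with
  | empty => simpa using HasSepDecomp.zero
  | insert k S hk ih =>
    rw [Finset.sum_insert hk, Finset.sum_insert hk]
    exact (h k).add ih

lemma IsSignedMixture.kronecker {X : Matrix n n ℂ} {P : Matrix n' n' ℂ}
    (hX : IsSignedMixture X) (hP : IsSignedMixture P) : HasSepDecomp (X ⊗ₖ P) 1 := by
  obtain ⟨a, ρ, hρ, rfl, ha⟩ := hX
  obtain ⟨b, σ, hσ, rfl, hb⟩ := hP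
  refine ⟨Fin 2 × Fin 2, inferInstance, fun s => a s.1 * b s.2, fun s => ρ s.1, fun s => σ s.2,
    fun s => hρ _, fun s => hσ _, ?_, ?_⟩
  · ext p q
    simp [Fintype.sum_prod_type, kroneckerMap_apply, Matrix.add_apply]
    ring
  · simp only [Fintype.sum_prod_type, abs_mul, ← Finset.mul_sum, hb, mul_one, ha]

lemma isDensityMatrix_vecMulVec {u : n → ℂ} (hu : star u ⬝ᵥ u = 1) :
    IsDensityMatrix (vecMulVec u (star u)) :=
  ⟨posSemidef_vecMulVec_self_star u, by rw [trace_vecMulVec, dotProduct_comm, hu]⟩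

lemma star_dotProduct_self_eq (z : n → ℂ) :
    star z ⬝ᵥ z = ((∑ i, Complex.normSq (z i) : ℝ) : ℂ) := by
  simp [dotProduct, Complex.normSq_eq_conj_mul_self]

/-- Normalization of `|z⟩⟨z|`. The unit vector `u` supplies the density matrix when `z = 0`. -/
lemma exists_density_smul_eq {u : n → ℂ} (hu : star u ⬝ᵥ u = 1) (z : n → ℂ) :
    ∃ ρ, IsDensityMatrix ρ ∧
      vecMulVec z (star z) = ((∑ i, Complex.normSq (z i) : ℝ) : ℂ) • ρ := by
  set t : ℝ := ∑ i, Complex.normSq (z i) with ht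
  have hz := star_dotProduct_self_eq z
  rw [← ht] at hz
  by_cases h : t = 0
  · refine ⟨_, isDensityMatrix_vecMulVec hu, ?_⟩
    rw [h, Complex.ofReal_zero, dotProduct_star_self_eq_zero] at hz
    simp [h, hz]
  · have h' : (t : ℂ) ≠ 0 := by exact_mod_cast h
    have ht0 : 0 ≤ t := Finset.sum_nonneg fun i _ => Complex.normSq_nonneg _
    refine ⟨(t : ℂ)⁻¹ • vecMulVec z (star z), ⟨?_, ?_⟩, ?_⟩
    · refine (posSemidef_vecMulVec_self_star z).smul ?_
      rw [← Complex.ofReal_inv]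
      exact_mod_cast inv_nonneg.mpr ht0
    · rw [trace_smul, trace_vecMulVec, dotProduct_comm, hz, smul_eq_mul, inv_mul_cancel₀ h']
    · rw [smul_smul, mul_inv_cancel₀ h', one_smul]

/-- The polarization identity writes `hermPart u v` through `|u ± v⟩⟨u ± v| / 4`, and by the
parallelogram law the two weights `‖u ± v‖² / 4` add up to `1`. -/
lemma isSignedMixture_hermPart {u v : n → ℂ} (hu : star u ⬝ᵥ u = 1) (hv : star v ⬝ᵥ v = 1) :
    IsSignedMixture (hermPart u v) := by
  obtain ⟨ρ, hρ, h₁⟩ := exists_density_smul_eq hu (u + v)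
  obtain ⟨τ, hτ, h₂⟩ := exists_density_smul_eq hu (u - v)
  have e₁ := star_dotProduct_self_eq (u + v)
  have e₂ := star_dotProduct_self_eq (u - v)
  set p : ℝ := ∑ i, Complex.normSq ((u + v) i) with hp
  set q : ℝ := ∑ i, Complex.normSq ((u - v) i) with hq
  have hp0 : 0 ≤ p := Finset.sum_nonneg fun i _ => Complex.normSq_nonneg _
  have hq0 : 0 ≤ q := Finset.sum_nonneg fun i _ => Complex.normSq_nonneg _
  have hpq : p + q = 4 := by
    have : (p : ℂ) + q = 4 := by
      rw [← e₁, ← e₂]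
      simp only [star_add, star_sub, add_dotProduct, sub_dotProduct, dotProduct_add,
        dotProduct_sub, hu, hv]
      ring
    exact_mod_cast this
  refine ⟨![p / 4, -(q / 4)], ![ρ, τ], ?_, ?_, ?_⟩
  · intro s
    fin_cases s
    exacts [hρ, hτ]
  · have : hermPart u v = (1 / 4 : ℂ) • vecMulVec (u + v) (star (u + v))
        - (1 / 4 : ℂ) • vecMulVec (u - v) (star (u - v)) := by
      ext i j
      simp [hermPart, vecMulVec_apply]
      ring
    rw [this, h₁, h₂]
    ext i j
    simp [Fin.sum_univ_two]
    ring
  · simp only [Fin.sum_univ_two, Matrix.cons_val_zero, Matrix.cons_val_one, abs_neg]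
    rw [abs_of_nonneg (by positivity), abs_of_nonneg (by positivity)]
    linarith

lemma star_neg_I_smul_dotProduct {u : n → ℂ} (hu : star u ⬝ᵥ u = 1) :
    star (-Complex.I • u) ⬝ᵥ (-Complex.I • u) = 1 := by
  simp [smul_dotProduct, dotProduct_smul, hu]

/-- The cross terms between Hermitian and skew parts cancel under `j ↔ k`, so only the
products of the Hermitian parts and of the skew parts survive. The diagonal skew parts vanish. -/
lemma sum_vecMulVec_kronecker_eq {m : ℕ} (c : Fin m → ℝ) (v : Fin m → n → ℂ)
    (w : Fin m → n' → ℂ) :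
    ∑ j, ∑ k, ((c j * c k : ℝ) : ℂ) •
        (vecMulVec (v j) (star (v k)) ⊗ₖ vecMulVec (w j) (star (w k))) =
      ∑ j, ∑ k, (((c j * c k : ℝ) : ℂ) • (hermPart (v j) (v k) ⊗ₖ hermPart (w j) (w k)) +
        ((if j = k then 0 else -(c j * c k) : ℝ) : ℂ) •
          (hermPart (-Complex.I • v j) (v k) ⊗ₖ hermPart (-Complex.I • w j) (w k))) := by
  have hterm : ∀ j k, ((c j * c k : ℝ) : ℂ) • (hermPart (v j) (v k) ⊗ₖ hermPart (w j) (w k)) +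
        ((if j = k then 0 else -(c j * c k) : ℝ) : ℂ) •
          (hermPart (-Complex.I • v j) (v k) ⊗ₖ hermPart (-Complex.I • w j) (w k)) =
      (1 / 2 : ℂ) • (((c j * c k : ℝ) : ℂ) •
        (vecMulVec (v j) (star (v k)) ⊗ₖ vecMulVec (w j) (star (w k)))) +
      (1 / 2 : ℂ) • (((c k * c j : ℝ) : ℂ) •
        (vecMulVec (v k) (star (v j)) ⊗ₖ vecMulVec (w k) (star (w j)))) := by
    intro j k
    ext p q
    by_cases h : j = k
    · subst h
      simp [hermPart, vecMulVec_apply, kroneckerMap_apply]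
      ring
    · simp [hermPart, vecMulVec_apply, kroneckerMap_apply, h]
      ring_nf
      simp only [Complex.I_sq]
      ring
  simp only [hterm, Finset.sum_add_distrib, ← Finset.smul_sum]
  rw [Finset.sum_comm (f := fun j k => ((c k * c j : ℝ) : ℂ) •
        (vecMulVec (v k) (star (v j)) ⊗ₖ vecMulVec (w k) (star (w j)))), ← add_smul]
  norm_num

lemma hasSepDecomp_sum {m : ℕ} (c : Fin m → ℝ) (v : Fin m → n → ℂ) (w : Fin m → n' → ℂ)
    (hv : ∀ j, star (v j) ⬝ᵥ v j = 1) (hw : ∀ j, star (w j) ⬝ᵥ w j = 1) :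
    HasSepDecomp (∑ j, ∑ k, ((c j * c k : ℝ) : ℂ) •
        (vecMulVec (v j) (star (v k)) ⊗ₖ vecMulVec (w j) (star (w k))))
      (2 * (∑ j, |c j|) ^ 2 - ∑ j, (c j) ^ 2) := by
  rw [sum_vecMulVec_kronecker_eq]
  have hr : 2 * (∑ j, |c j|) ^ 2 - ∑ j, (c j) ^ 2 =
      ∑ j, ∑ k, (|c j * c k| * 1 + |if j = k then 0 else -(c j * c k)| * 1) := by
    have hd : ∀ j k, |c j * c k| * 1 + |if j = k then 0 else -(c j * c k)| * 1 =
        2 * (|c j| * |c k|) - if j = k then (c j) ^ 2 else 0 := by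
      intro j k
      by_cases h : j = k
      · subst h
        simp [← sq]
        ring
      · simp [h, abs_mul]
        ring
    simp only [hd, Finset.sum_sub_distrib, ← Finset.mul_sum, ← Finset.sum_mul]
    simp [sq]
  rw [hr]
  refine HasSepDecomp.sum _ _ _ fun j => HasSepDecomp.sum _ _ _ fun k => ?_
  exact ((isSignedMixture_hermPart (hv j) (hv k)).kronecker
      (isSignedMixture_hermPart (hw j) (hw k))).smul _ |>.add
    (((isSignedMixture_hermPart (star_neg_I_smul_dotProduct (hv j)) (hv k)).kronecker
      (isSignedMixture_hermPart (star_neg_I_smul_dotProduct (hw j)) (hw k))).smul _)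

end

/-- The vectorization of `V` divided by `√d`, indexed by (input, output). -/
noncomputable def normVec {d : ℕ} (V : Matrix (Fin d) (Fin d) ℂ) : Fin d × Fin d → ℂ :=
  fun p => ((√(d : ℝ))⁻¹ : ℝ) * V p.2 p.1

lemma star_normVec_dotProduct {d : ℕ} (hd : 0 < d) {V : Matrix (Fin d) (Fin d) ℂ}
    (hV : V ∈ Matrix.unitaryGroup (Fin d) ℂ) : star (normVec V) ⬝ᵥ normVec V = 1 := by
  have hs : (((√(d : ℝ))⁻¹ : ℝ) : ℂ) * (((√(d : ℝ))⁻¹ : ℝ) : ℂ) = (d : ℂ)⁻¹ := by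
    rw [← Complex.ofReal_mul, ← mul_inv, Real.mul_self_sqrt (Nat.cast_nonneg d)]
    simp
  have h1 : ∀ i, ∑ i', star (V i' i) * V i' i = 1 := by
    intro i
    have := congrFun (congrFun (Matrix.mem_unitaryGroup_iff'.mp hV) i) i
    simpa [Matrix.mul_apply, Matrix.star_apply] using this
  have h2 : ∀ p : Fin d × Fin d, star (normVec V) p * normVec V p =
      (d : ℂ)⁻¹ * (star (V p.2 p.1) * V p.2 p.1) := by
    intro p
    rw [← hs]
    simp only [normVec, Pi.star_apply, star_mul', RCLike.star_def, Complex.conj_ofReal]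
    ring
  have hd' : (d : ℂ) ≠ 0 := by exact_mod_cast hd.ne'
  simp only [dotProduct, h2, ← Finset.mul_sum, Fintype.sum_prod_type, h1]
  simp [hd']

lemma choiState_eq_sum (dA dB m : ℕ) (c : Fin m → ℝ)
    (V : Fin m → Matrix (Fin dA) (Fin dA) ℂ) (W : Fin m → Matrix (Fin dB) (Fin dB) ℂ) :
    choiState dA dB (∑ j, (c j : ℂ) • (V j ⊗ₖ W j)) =
      ∑ j, ∑ k, ((c j * c k : ℝ) : ℂ) •
        (vecMulVec (normVec (V j)) (star (normVec (V k))) ⊗ₖ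
          vecMulVec (normVec (W j)) (star (normVec (W k)))) := by
  have hs : ∀ d : ℕ, (d : ℂ)⁻¹ = (((√(d : ℝ))⁻¹ : ℝ) : ℂ) * (((√(d : ℝ))⁻¹ : ℝ) : ℂ) := by
    intro d
    rw [← Complex.ofReal_mul, ← mul_inv, Real.mul_self_sqrt (Nat.cast_nonneg d)]
    simp
  ext p q
  simp only [choiState, Matrix.of_apply, Matrix.sum_apply, Matrix.smul_apply, kroneckerMap_apply,
    vecMulVec_apply, normVec, Pi.star_apply, smul_eq_mul, map_sum, map_mul, star_mul',
    RCLike.star_def, Complex.conj_ofReal, Finset.sum_mul_sum, one_div, mul_inv, hs]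
  simp only [Finset.mul_sum]
  refine Finset.sum_congr rfl fun j _ => Finset.sum_congr rfl fun k _ => ?_
  push_cast
  ring

/-- If `U = Σ_j c_j V_j ⊗ W_j` with each `V_j`, `W_j` unitary,
then the Choi state of `U` decomposes as `Σ_s a_s ρ_s ⊗ σ_s` with density matrices
`ρ_s`, `σ_s` and `Σ_s |a_s| = 2‖c‖₁² − ‖c‖₂²`. -/
theorem choiState_separable_decomposition (dA dB : ℕ) (hdA : 0 < dA) (hdB : 0 < dB)
    (U : Matrix (Fin dA × Fin dB) (Fin dA × Fin dB) ℂ)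
    (hU : U ∈ Matrix.unitaryGroup (Fin dA × Fin dB) ℂ)
    (m : ℕ) (c : Fin m → ℝ)
    (V : Fin m → Matrix (Fin dA) (Fin dA) ℂ)
    (W : Fin m → Matrix (Fin dB) (Fin dB) ℂ)
    (hV : ∀ j, V j ∈ Matrix.unitaryGroup (Fin dA) ℂ)
    (hW : ∀ j, W j ∈ Matrix.unitaryGroup (Fin dB) ℂ)
    (hdecomp : U = ∑ j, (c j : ℂ) • (V j ⊗ₖ W j)) :
    ∃ (N : ℕ) (a : Fin N → ℝ)
      (ρ : Fin N → Matrix (Fin dA × Fin dA) (Fin dA × Fin dA) ℂ)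
      (σ : Fin N → Matrix (Fin dB × Fin dB) (Fin dB × Fin dB) ℂ),
      (∀ s, IsDensityMatrix (ρ s)) ∧
      (∀ s, IsDensityMatrix (σ s)) ∧
      choiState dA dB U = ∑ s, (a s : ℂ) • (ρ s ⊗ₖ σ s) ∧
      ∑ s, |a s| = 2 * (∑ j, |c j|) ^ 2 - ∑ j, (c j) ^ 2 := by
  subst hdecomp
  obtain ⟨ι, _, a, ρ, σ, hρ, hσ, hJ, ha⟩ := hasSepDecomp_sum c (fun j => normVec (V j))
    (fun j => normVec (W j)) (fun j => star_normVec_dotProduct hdA (hV j))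
    (fun j => star_normVec_dotProduct hdB (hW j))
  let e := (Fintype.equivFin ι).symm
  refine ⟨Fintype.card ι, a ∘ e, ρ ∘ e, σ ∘ e, fun s => hρ _, fun s => hσ _, ?_, ?_⟩
  · rw [choiState_eq_sum, hJ]
    exact (e.sum_comp fun s => (a s : ℂ) • (ρ s ⊗ₖ σ s)).symm
  · rw [← ha]
    exact e.sum_comp fun s => |a s|
end

section
/- Fix d ≥ 1 and for θ = (θ_1,…,θ_d) ∈ [0,2π)^d let v_θ = (1/√d) Σ_{j=1}^d e^{iθ_j} e_j, where (e_j) is the standard basis of ℂ^d. Then, with θ drawn uniformly from [0,2π)^d, E_θ [ (v_θ v_θ†) ⊗ (v_θ v_θ†) ] = (1/d²) ( F + Σ_{k≠ℓ} (e_k e_k†) ⊗ (e_ℓ e_ℓ†) ), where F ∈ M_{d²}(ℂ) is the swap matrix with entries F_{(i,j),(k,l)} = δ_{il} δ_{jk}. -/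
/-!
Up to the factor `1/d²`, the entry at `((a, b), (c, e))` of the averaged matrix is the mean of
the torus character `θ ↦ e^{i(θ_a + θ_b - θ_c - θ_e)}`. By `integral_torus_character` this mean
is `1` if the integer frequency vector `e_a + e_b - e_c - e_e` vanishes and `0` otherwise, and it
vanishes precisely when `{a, b} = {c, e}` as multisets (`single_pair_eq_zero_iff`). The matching
`a = e, b = c` gives the swap matrix; the matching `a = c, b = e` gives the diagonal sum, in which
`a ≠ b` prevents counting `a = b = c = e` twice (`diagonal_sum_apply`).
-/

open Matrix Kronecker Finset MeasureTheory

/-- The uniform probability measure on `[0, 2π)^d`. -/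
noncomputable def uniformPhases (d : ℕ) : Measure (Fin d → ℝ) :=
  Measure.pi fun _ =>
    (ENNReal.ofReal (2 * Real.pi))⁻¹ • (volume.restrict (Set.Ico 0 (2 * Real.pi)))

/-- The swap matrix `F ∈ M_{d²}(ℂ)`, `F_{(i,j),(k,l)} = δ_{il} δ_{jk}`. -/
def swapMatrix (d : ℕ) : Matrix (Fin d × Fin d) (Fin d × Fin d) ℂ :=
  Matrix.of fun p q => if p.1 = q.2 ∧ p.2 = q.1 then 1 else 0

/-- The character `x ↦ e^{inx}` has mean `δ_{n,0}` under the uniform law on `[0, 2π)`. -/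
lemma integral_character (n : ℤ) :
    ∫ x : ℝ, Complex.exp (Complex.I * (n * x))
      ∂((ENNReal.ofReal (2 * Real.pi))⁻¹ • (volume.restrict (Set.Ico 0 (2 * Real.pi))))
      = if n = 0 then 1 else 0 := by
  have hpi : (0 : ℝ) < 2 * Real.pi := Real.two_pi_pos
  rw [integral_smul_measure, integral_Ico_eq_integral_Ioc,
    ← intervalIntegral.integral_of_le hpi.le]
  split_ifs with h
  · subst h
    have hc : (Real.pi : ℂ) ≠ 0 := by exact_mod_cast Real.pi_ne_zero
    simp [ENNReal.toReal_inv, Real.pi_pos.le]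
    field_simp
  · have hc : Complex.I * (n : ℂ) ≠ 0 :=
      mul_ne_zero Complex.I_ne_zero (by exact_mod_cast h)
    have h1 := integral_exp_mul_complex (a := 0) (b := 2 * Real.pi) hc
    have h2 : Complex.exp (Complex.I * n * ((2 * Real.pi : ℝ) : ℂ)) = 1 := by
      rw [Complex.exp_eq_one_iff]
      exact ⟨n, by push_cast; ring⟩
    simp only [mul_assoc] at h1 h2
    rw [h1, h2]
    simp

/-- By Fubini, the character `θ ↦ e^{i⟨n, θ⟩}` of the torus has mean `δ_{n,0}`. -/
lemma integral_torus_character (d : ℕ) (n : Fin d → ℤ) :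
    ∫ θ, Complex.exp (Complex.I * ∑ j, (n j : ℂ) * (θ j : ℂ)) ∂(uniformPhases d)
      = if n = 0 then 1 else 0 := by
  have hne : ENNReal.ofReal (2 * Real.pi) ≠ 0 := by
    simpa using Real.pi_pos
  have : IsFiniteMeasure ((ENNReal.ofReal (2 * Real.pi))⁻¹ •
      ((volume : Measure ℝ).restrict (Set.Ico 0 (2 * Real.pi)))) :=
    Measure.smul_finite _ (ENNReal.inv_ne_top.2 hne)
  simp only [Finset.mul_sum, Complex.exp_sum, uniformPhases]
  rw [integral_fintype_prod_eq_prod (𝕜 := ℂ)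
    (f := fun j (x : ℝ) => Complex.exp (Complex.I * ((n j : ℂ) * (x : ℂ))))]
  simp only [integral_character]
  rw [Finset.prod_ite_zero]
  simp [funext_iff]

/-- Two unordered pairs of basis vectors have equal sums exactly when the pairs agree. -/
lemma single_pair_eq_zero_iff {ι : Type*} [DecidableEq ι] (a b c e : ι) :
    (Pi.single a 1 + Pi.single b 1 - Pi.single c 1 - Pi.single e 1 : ι → ℤ) = 0 ↔
      (a = e ∧ b = c) ∨ (a = c ∧ b = e) := by
  constructor
  · intro h
    have ha := congrFun h a
    have hb := congrFun h b
    have hc := congrFun h c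
    have he := congrFun h e
    simp only [Pi.sub_apply, Pi.add_apply, Pi.single_apply, Pi.zero_apply] at ha hb hc he
    grind
  · rintro (⟨rfl, rfl⟩ | ⟨rfl, rfl⟩) <;> abel

/-- The diagonal part of the right-hand side has entry `1` at `((a, b), (a, b))` for `a ≠ b`,
and `0` elsewhere. -/
lemma diagonal_sum_apply (d : ℕ) (a b c e : Fin d) :
    (∑ k : Fin d, ∑ l ∈ Finset.univ \ {k},
      vecMulVec (Pi.single k (1 : ℂ)) (star (Pi.single k (1 : ℂ))) ⊗ₖ
        vecMulVec (Pi.single l (1 : ℂ)) (star (Pi.single l (1 : ℂ))) :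
      Matrix (Fin d × Fin d) (Fin d × Fin d) ℂ) (a, b) (c, e)
      = if a = c ∧ b = e ∧ a ≠ b then 1 else 0 := by
  have key : ∀ k l : Fin d,
      (vecMulVec (Pi.single k (1 : ℂ)) (star (Pi.single k (1 : ℂ))) ⊗ₖ
        vecMulVec (Pi.single l (1 : ℂ)) (star (Pi.single l (1 : ℂ)))) (a, b) (c, e)
      = if a = k then (if b = l then (if a = c ∧ b = e then 1 else 0) else 0) else 0 := by
    intro k l
    simp only [kroneckerMap_apply, vecMulVec_apply, Pi.star_apply, Pi.single_apply]
    split_ifs <;> simp <;> grind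
  simp only [Matrix.sum_apply, key, Finset.sum_ite_irrel, Finset.sum_const_zero,
    Finset.sum_ite_eq, Finset.mem_univ, if_true]
  simp only [Finset.mem_sdiff, Finset.mem_univ, Finset.mem_singleton, true_and]
  split_ifs <;> grind

/-- For `v_θ = (1/√d) Σ_j e^{iθ_j} e_j` with `θ` uniform on
`[0,2π)^d`, `E_θ[(v_θ v_θ†) ⊗ (v_θ v_θ†)] = (1/d²)(F + Σ_{k≠ℓ} (e_k e_k†) ⊗ (e_ℓ e_ℓ†))`
entrywise. -/
theorem second_moment_equatorial (d : ℕ) (hd : 1 ≤ d)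
    (v : (Fin d → ℝ) → Fin d → ℂ)
    (hv : v = fun θ j => (((Real.sqrt d)⁻¹ : ℝ) : ℂ) * Complex.exp (Complex.I * θ j)) :
    ∀ p q : (Fin d × Fin d),
      (∫ θ, ((vecMulVec (v θ) (star (v θ)) ⊗ₖ
          vecMulVec (v θ) (star (v θ))) p q) ∂(uniformPhases d))
        = ((((d : ℝ) ^ 2)⁻¹ •
            (swapMatrix d + ∑ k : Fin d, ∑ l ∈ Finset.univ \ {k},
              vecMulVec (Pi.single k (1 : ℂ)) (star (Pi.single k (1 : ℂ))) ⊗ₖ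
                vecMulVec (Pi.single l (1 : ℂ)) (star (Pi.single l (1 : ℂ)))) :
            Matrix (Fin d × Fin d) (Fin d × Fin d) ℂ)) p q := by
  rintro ⟨a, b⟩ ⟨c, e⟩
  subst hv
  have hint : ∀ θ : Fin d → ℝ,
      (vecMulVec (fun j => (((Real.sqrt d)⁻¹ : ℝ) : ℂ) * Complex.exp (Complex.I * θ j))
          (star fun j => (((Real.sqrt d)⁻¹ : ℝ) : ℂ) * Complex.exp (Complex.I * θ j)) ⊗ₖ
        vecMulVec (fun j => (((Real.sqrt d)⁻¹ : ℝ) : ℂ) * Complex.exp (Complex.I * θ j))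
          (star fun j => (((Real.sqrt d)⁻¹ : ℝ) : ℂ) * Complex.exp (Complex.I * θ j)))
        (a, b) (c, e)
      = ((((d : ℝ) ^ 2)⁻¹ : ℝ) : ℂ) * Complex.exp (Complex.I * ∑ j,
          (((Pi.single a 1 + Pi.single b 1 - Pi.single c 1 - Pi.single e 1 : Fin d → ℤ) j : ℤ) : ℂ)
            * (θ j : ℂ)) := by
    intro θ
    have hs : ∑ j, (((Pi.single a 1 + Pi.single b 1 - Pi.single c 1 - Pi.single e 1 :
        Fin d → ℤ) j : ℤ) : ℂ) * (θ j : ℂ) = θ a + θ b - θ c - θ e := by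
      simp [Pi.single_apply, sub_mul, add_mul, Finset.sum_add_distrib, Finset.sum_sub_distrib]
    have hd4 : (((d : ℝ) ^ 2)⁻¹ : ℝ) = (Real.sqrt d)⁻¹ ^ 4 := by
      rw [inv_pow, show (4 : ℕ) = 2 * 2 from rfl, pow_mul, Real.sq_sqrt (Nat.cast_nonneg d)]
    have hexp : Complex.exp (Complex.I * (θ a + θ b - θ c - θ e))
        = Complex.exp (Complex.I * θ a) * Complex.exp (-(Complex.I * θ c)) *
          (Complex.exp (Complex.I * θ b) * Complex.exp (-(Complex.I * θ e))) := by
      simp only [← Complex.exp_add]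
      congr 1
      ring
    rw [hs, hd4, hexp]
    simp only [kroneckerMap_apply, vecMulVec_apply, Pi.star_apply, RCLike.star_def, map_mul,
      Complex.conj_ofReal, ← Complex.exp_conj, Complex.conj_I, neg_mul]
    push_cast
    ring
  simp only [hint]
  rw [integral_const_mul, integral_torus_character, Matrix.smul_apply, Matrix.add_apply,
    diagonal_sum_apply, Complex.real_smul]
  congr 1
  simp only [single_pair_eq_zero_iff, swapMatrix, Matrix.of_apply]
  split_ifs <;> grind
end

section
/- Fix d_A, d_E ≥ 1, let X be a Hermitian matrix on ℂ^{d_A} ⊗ ℂ^{d_E} (indexed by Fin d_A × Fin d_E), and for θ ∈ [0,2π)^{d_A} let v_θ = (1/√d_A) Σ_{j} e^{iθ_j} e_j ∈ ℂ^{d_A}. Then, in the positive semidefinite (Loewner) order, d_A² · E_θ [ (v_θ v_θ†) ⊗ ( (v_θ ⊗ I_{d_E})† X² (v_θ ⊗ I_{d_E}) ) ] ⪯ X² + I_{d_A} ⊗ Tr_A(X²), where the expectation is over θ uniform on [0,2π)^{d_A}. -/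
/-!
Write `Y = X²` and expand the compression. The `((i, e), (j, f))` entry of the left-hand side is
`∑ a a', E[exp (I (θ i - θ j - θ a + θ a'))] * Y ((a, e), (a', f))`. By independence of the phases and
the orthogonality of characters of the circle (`expect_phases`), the expectation is `1` when the
multisets `{i, a'}` and `{j, a}` agree and `0` otherwise. Hence the moment equals `I ⊗ Tr_A Y` plus
the part of `Y` lying off the block diagonal with respect to the `A` index, and the difference to
`Y + I ⊗ Tr_A Y` is exactly the block diagonal of `Y` (`pinching`). This is positive semidefinite
because it is a sum of compressions of `Y = Xᴴ X`.
-/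

open Matrix Kronecker Finset MeasureTheory
open scoped ComplexOrder

/-- The equatorial state `v_θ = (1/√d) Σ_j e^{iθ_j} e_j`. -/
noncomputable def equatorial (d : ℕ) (θ : Fin d → ℝ) : Fin d → ℂ :=
  fun j => (((Real.sqrt d)⁻¹ : ℝ) : ℂ) * Complex.exp (Complex.I * θ j)

/-- Partial trace over the `A` system:
`Tr_A(Y)_{e,e'} = Σ_a Y_{(a,e),(a,e')}`. -/
noncomputable def trA (dA dE : ℕ) (Y : Matrix (Fin dA × Fin dE) (Fin dA × Fin dE) ℂ) :
    Matrix (Fin dE) (Fin dE) ℂ :=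
  Matrix.of fun e e' => ∑ a : Fin dA, Y (a, e) (a, e')

/-- The compression `(v ⊗ I)† Y (v ⊗ I) ∈ M_{d_E}(ℂ)`. -/
noncomputable def compressA (dA dE : ℕ) (v : Fin dA → ℂ)
    (Y : Matrix (Fin dA × Fin dE) (Fin dA × Fin dE) ℂ) :
    Matrix (Fin dE) (Fin dE) ℂ :=
  Matrix.of fun e e' =>
    ∑ a : Fin dA, ∑ a' : Fin dA, star (v a) * Y (a, e) (a', e') * v a'

/-- The normalised uniform measure on `[0, 2π)`, the one-coordinate factor of `uniformPhases`. -/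
noncomputable def phaseMeasure : Measure ℝ :=
  (ENNReal.ofReal (2 * Real.pi))⁻¹ • (volume.restrict (Set.Ico 0 (2 * Real.pi)))

instance : IsProbabilityMeasure phaseMeasure := by
  refine ⟨?_⟩
  have hpos : 0 < 2 * Real.pi := by positivity
  simp only [phaseMeasure, Measure.smul_apply, Measure.restrict_apply MeasurableSet.univ,
    Set.univ_inter, Real.volume_Ico, sub_zero, smul_eq_mul]
  exact ENNReal.inv_mul_cancel (by simpa using hpos) ENNReal.ofReal_ne_top

lemma uniformPhases_eq (d : ℕ) : uniformPhases d = Measure.pi fun _ => phaseMeasure := rfl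

instance (d : ℕ) : IsProbabilityMeasure (uniformPhases d) := by
  rw [uniformPhases_eq]; infer_instance

/-- Orthogonality of the characters of the circle. -/
lemma integral_phase (n : ℤ) :
    ∫ t, Complex.exp (Complex.I * n * t) ∂phaseMeasure = if n = 0 then 1 else 0 := by
  split_ifs with h
  · simp [h]
  · have hc : Complex.I * (n : ℂ) ≠ 0 := mul_ne_zero Complex.I_ne_zero (by exact_mod_cast h)
    rw [phaseMeasure, integral_smul_measure, integral_Ico_eq_integral_Ioc,
      ← intervalIntegral.integral_of_le (by positivity), integral_exp_mul_complex hc]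
    have h1 : Complex.exp (Complex.I * n * ((2 * Real.pi : ℝ) : ℂ)) = 1 := by
      rw [Complex.exp_eq_one_iff]
      exact ⟨n, by push_cast; ring⟩
    rw [h1]; simp

lemma integral_phases {d : ℕ} (n : Fin d → ℤ) :
    ∫ θ, Complex.exp (Complex.I * ∑ k, (n k : ℂ) * (θ k : ℂ)) ∂(uniformPhases d)
      = if n = 0 then 1 else 0 := by
  have h (θ : Fin d → ℝ) : Complex.exp (Complex.I * ∑ k, (n k : ℂ) * (θ k : ℂ))
      = ∏ k, Complex.exp (Complex.I * n k * θ k) := by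
    rw [Finset.mul_sum, Complex.exp_sum]
    simp only [mul_assoc]
  simp only [h, uniformPhases_eq]
  rw [integral_fintype_prod_eq_prod (fun k (t : ℝ) => Complex.exp (Complex.I * n k * t))]
  simp only [integral_phase]
  rw [Finset.prod_ite_zero]
  simp [funext_iff]

/-- The exponent vector `e_i - e_j - e_a + e_b` vanishes iff `{i, b} = {j, a}` as multisets. -/
lemma exponent_eq_zero_iff {d : ℕ} (i j a b : Fin d) :
    (Pi.single i 1 - Pi.single j 1 - Pi.single a 1 + Pi.single b 1 : Fin d → ℤ) = 0
      ↔ (i = j ∧ a = b) ∨ (i = a ∧ b = j) := by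
  constructor
  · intro h
    have hi := congrFun h i
    have hb := congrFun h b
    simp only [Pi.add_apply, Pi.sub_apply, Pi.single_apply, Pi.zero_apply] at hi hb
    grind
  · rintro (⟨rfl, rfl⟩ | ⟨rfl, rfl⟩) <;> simp

lemma expect_phases {d : ℕ} (i j a b : Fin d) :
    ∫ θ, Complex.exp (Complex.I * (θ i - θ j - θ a + θ b)) ∂(uniformPhases d)
      = if (i = j ∧ a = b) ∨ (i = a ∧ b = j) then 1 else 0 := by
  have h := integral_phases
    (Pi.single i 1 - Pi.single j 1 - Pi.single a 1 + Pi.single b 1 : Fin d → ℤ)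
  simp only [exponent_eq_zero_iff] at h
  rw [← h]
  congr 1
  funext θ
  simp [Pi.single_apply, add_mul, sub_mul, Finset.sum_add_distrib, Finset.sum_sub_distrib]

lemma integrable_phases {d : ℕ} (i j a b : Fin d) :
    Integrable (fun θ : Fin d → ℝ => Complex.exp (Complex.I * (θ i - θ j - θ a + θ b)))
      (uniformPhases d) := by
  refine Integrable.of_bound (C := 1) (Continuous.aestronglyMeasurable (by fun_prop))
    (Filter.Eventually.of_forall fun θ => ?_)
  rw [Complex.norm_exp]
  simp

/-- The four amplitudes combine to a pure phase; the factor `d²` cancels the normalisation. -/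
lemma equatorial_four {d : ℕ} (hd : 1 ≤ d) (θ : Fin d → ℝ) (i j a b : Fin d) :
    (d : ℂ) ^ 2 * (equatorial d θ i * star (equatorial d θ j)
        * (star (equatorial d θ a) * equatorial d θ b))
      = Complex.exp (Complex.I * (θ i - θ j - θ a + θ b)) := by
  have hd0 : (d : ℂ) ≠ 0 := by exact_mod_cast (by omega : d ≠ 0)
  have hs : (((Real.sqrt d)⁻¹ : ℝ) : ℂ) ^ 2 = (d : ℂ)⁻¹ := by
    rw [← Complex.ofReal_pow, inv_pow, Real.sq_sqrt (Nat.cast_nonneg d)]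
    simp
  have he : Complex.exp (Complex.I * (θ i - θ j - θ a + θ b))
      = Complex.exp (Complex.I * θ i) * Complex.exp (-(Complex.I * θ j))
        * Complex.exp (-(Complex.I * θ a)) * Complex.exp (Complex.I * θ b) := by
    simp only [← Complex.exp_add]
    congr 1
    ring
  have hstar (k : Fin d) : star (equatorial d θ k)
      = (((Real.sqrt d)⁻¹ : ℝ) : ℂ) * Complex.exp (-(Complex.I * θ k)) := by
    simp only [equatorial, Complex.star_def, map_mul, Complex.conj_ofReal, ← Complex.exp_conj,
      Complex.conj_I, neg_mul]
  rw [he, hstar, hstar]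
  simp only [equatorial]
  generalize (((Real.sqrt d)⁻¹ : ℝ) : ℂ) = s at hs ⊢
  have hds : (d : ℂ) * s ^ 2 = 1 := by rw [hs, mul_inv_cancel₀ hd0]
  linear_combination (Complex.exp (Complex.I * θ i) * Complex.exp (-(Complex.I * θ j))
        * Complex.exp (-(Complex.I * θ a)) * Complex.exp (Complex.I * θ b))
        * ((d : ℂ) * s ^ 2 + 1) * hds

lemma moment_entry {dA dE : ℕ} (hdA : 1 ≤ dA)
    (Y : Matrix (Fin dA × Fin dE) (Fin dA × Fin dE) ℂ) (p q : Fin dA × Fin dE) :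
    ((dA : ℂ) ^ 2) *
        ∫ θ, ((equatorial dA θ p.1 * star (equatorial dA θ q.1)) *
          compressA dA dE (equatorial dA θ) Y p.2 q.2) ∂(uniformPhases dA)
      = ∑ a, ∑ b, (if (p.1 = q.1 ∧ a = b) ∨ (p.1 = a ∧ b = q.1) then 1 else 0)
          * Y (a, p.2) (b, q.2) := by
  have h (θ : Fin dA → ℝ) : (dA : ℂ) ^ 2 * ((equatorial dA θ p.1 * star (equatorial dA θ q.1)) *
          compressA dA dE (equatorial dA θ) Y p.2 q.2)
      = ∑ a, ∑ b, Complex.exp (Complex.I * (θ p.1 - θ q.1 - θ a + θ b))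
          * Y (a, p.2) (b, q.2) := by
    simp only [compressA, Matrix.of_apply, Finset.mul_sum]
    refine Finset.sum_congr rfl fun a _ => Finset.sum_congr rfl fun b _ => ?_
    rw [← equatorial_four hdA]
    ring
  rw [← integral_const_mul]
  simp only [h]
  have hint (a b : Fin dA) := (integrable_phases p.1 q.1 a b).mul_const (Y (a, p.2) (b, q.2))
  rw [integral_finsetSum _ fun a _ => integrable_finsetSum _ fun b _ => hint a b]
  refine Finset.sum_congr rfl fun a _ => ?_
  rw [integral_finsetSum _ fun b _ => hint a b]
  refine Finset.sum_congr rfl fun b _ => ?_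
  rw [integral_mul_const, expect_phases]

/-- The block diagonal part of `Y` with respect to the `A` index. -/
def pinching {dA dE : ℕ} (Y : Matrix (Fin dA × Fin dE) (Fin dA × Fin dE) ℂ) :
    Matrix (Fin dA × Fin dE) (Fin dA × Fin dE) ℂ :=
  Matrix.of fun p q => if p.1 = q.1 then Y p q else 0

/-- The pinching is `∑ a, P_a Y P_a` for the projections `P_a` onto the blocks. -/
lemma pinching_posSemidef {dA dE : ℕ} {Y : Matrix (Fin dA × Fin dE) (Fin dA × Fin dE) ℂ}
    (hY : Y.PosSemidef) : (pinching Y).PosSemidef := by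
  let P (a : Fin dA) : Matrix (Fin dA × Fin dE) (Fin dA × Fin dE) ℂ :=
    Matrix.diagonal fun p => if p.1 = a then 1 else 0
  have h : pinching Y = ∑ a, (P a)ᴴ * Y * P a := by
    ext p q
    simp only [pinching, P, Matrix.of_apply, Matrix.sum_apply, Matrix.diagonal_conjTranspose,
      Matrix.mul_diagonal, Matrix.diagonal_mul]
    by_cases hpq : p.1 = q.1
    · simp [hpq, apply_ite]
    · simp [hpq, apply_ite]
  rw [h]
  exact Matrix.posSemidef_sum _ fun a _ => hY.conjTranspose_mul_mul_same (P a)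

lemma difference_eq_pinching {dA dE : ℕ} (hdA : 1 ≤ dA)
    (Y : Matrix (Fin dA × Fin dE) (Fin dA × Fin dE) ℂ) :
    (Y + (1 : Matrix (Fin dA) (Fin dA) ℂ) ⊗ₖ trA dA dE Y
      - Matrix.of fun p q : Fin dA × Fin dE =>
          ((dA : ℂ) ^ 2) *
            ∫ θ, ((equatorial dA θ p.1 * star (equatorial dA θ q.1)) *
              compressA dA dE (equatorial dA θ) Y p.2 q.2)
              ∂(uniformPhases dA)) = pinching Y := by
  ext ⟨i, e⟩ ⟨j, f⟩
  simp only [Matrix.sub_apply, Matrix.add_apply, Matrix.of_apply, moment_entry hdA,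
    Matrix.kroneckerMap_apply, trA, pinching, Matrix.one_apply]
  by_cases hij : i = j
  · subst hij
    -- For equal block indices both pairings force `a = b`, so only the partial trace appears.
    have hc (a b : Fin dA) : (a = b ∨ (i = a ∧ b = i)) ↔ a = b := by grind
    simp [hc]
  · simp [hij, ite_and]

/-- For Hermitian `X` on `ℂ^{d_A} ⊗ ℂ^{d_E}` and θ uniform
on `[0,2π)^{d_A}`,
`d_A² E_θ[(v_θ v_θ†) ⊗ ((v_θ ⊗ I)† X² (v_θ ⊗ I))] ⪯ X² + I ⊗ Tr_A(X²)`. -/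
theorem equatorial_second_moment_operator_bound (dA dE : ℕ) (hdA : 1 ≤ dA) (hdE : 1 ≤ dE)
    (X : Matrix (Fin dA × Fin dE) (Fin dA × Fin dE) ℂ) (hX : X.IsHermitian) :
    (X * X + (1 : Matrix (Fin dA) (Fin dA) ℂ) ⊗ₖ trA dA dE (X * X)
      - Matrix.of fun p q : Fin dA × Fin dE =>
          ((dA : ℂ) ^ 2) *
            ∫ θ, ((equatorial dA θ p.1 * star (equatorial dA θ q.1)) *
              compressA dA dE (equatorial dA θ) (X * X) p.2 q.2)
              ∂(uniformPhases dA)).PosSemidef := by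
  have hY : (X * X).PosSemidef := by
    have h := Matrix.posSemidef_conjTranspose_mul_self X
    rwa [hX.eq] at h
  rw [difference_eq_pinching hdA]
  exact pinching_posSemidef hY
end

section
/- Let ρ be a density matrix on ℂ^{d_A} ⊗ ℂ^{d_B}, and suppose ρ = Σ_{j=1}^{m} a_j σ_j for some real numbers a_j and separable states σ_j ∈ SEP(d_A, d_B). Then Σ_{j=1}^{m} |a_j| ≥ 1 + 2 R(ρ), where R(ρ) is the robustness of entanglement. (Equivalently, writing κ₋ = Σ_{j: a_j<0} |a_j|, there exist σ₊, σ₋ ∈ SEP(d_A, d_B) with ρ = (1+κ₋)σ₊ − κ₋σ₋, whence R(ρ) ≤ κ₋ = (Σ_j|a_j| − 1)/2.) -/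
/-!
Every separable state has trace 1, so taking traces in `ρ = ∑ j, a j • σ j` gives `∑ j, a j = 1`.
With `κ = ∑ j, (a j)⁻` this means `∑ j, (a j)⁺ = 1 + κ` and `∑ j, |a j| = 1 + 2 κ`. Normalising the
positive and the negative part of the sum gives, by convexity, separable states `σ₊` and `σ₋` with
`ρ = (1 + κ) • σ₊ - κ • σ₋`. Hence `κ` is admissible in the infimum defining the robustness.
-/

open Matrix Kronecker Finset
open scoped ComplexOrder

/-- Separable states on `ℂ^{d_A} ⊗ ℂ^{d_B}`: the convex hull (over ℝ) of
Kronecker products of density matrices. -/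
def SEP (dA dB : ℕ) : Set (Matrix (Fin dA × Fin dB) (Fin dA × Fin dB) ℂ) :=
  convexHull ℝ {M | ∃ (P : Matrix (Fin dA) (Fin dA) ℂ)
    (Q : Matrix (Fin dB) (Fin dB) ℂ),
    IsDensityMatrix P ∧ IsDensityMatrix Q ∧ M = P ⊗ₖ Q}

/-- The robustness of entanglement. -/
noncomputable def robustness (dA dB : ℕ)
    (ρ : Matrix (Fin dA × Fin dB) (Fin dA × Fin dB) ℂ) : ℝ :=
  sInf {s : ℝ | 0 ≤ s ∧ ∃ σ ∈ SEP dA dB, (1 / (1 + s)) • (ρ + s • σ) ∈ SEP dA dB}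

lemma trace_eq_one_of_mem_SEP {dA dB : ℕ} {M : Matrix (Fin dA × Fin dB) (Fin dA × Fin dB) ℂ}
    (hM : M ∈ SEP dA dB) : M.trace = 1 := by
  have hsub : SEP dA dB ⊆ {M | Matrix.traceLinearMap (Fin dA × Fin dB) ℝ ℂ M = 1} := by
    refine convexHull_min ?_ ((convex_singleton (1 : ℂ)).linear_preimage _)
    rintro _ ⟨P, Q, hP, hQ, rfl⟩
    simp [Matrix.trace_kronecker, hP.2, hQ.2]
  simpa using hsub hM

/-- A nonnegative combination of separable states is its total weight times a separable state.
Nonemptiness of the index type supplies a separable state when the total weight is zero. -/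
lemma exists_mem_SEP_smul_eq_sum {dA dB : ℕ} {ι : Type*} [Fintype ι] [Nonempty ι] (w : ι → ℝ)
    (hw : ∀ j, 0 ≤ w j) (σ : ι → Matrix (Fin dA × Fin dB) (Fin dA × Fin dB) ℂ)
    (hσ : ∀ j, σ j ∈ SEP dA dB) :
    ∃ τ ∈ SEP dA dB, (∑ j, w j) • τ = ∑ j, w j • σ j := by
  rcases (Finset.sum_nonneg fun j _ => hw j : 0 ≤ ∑ j, w j).eq_or_lt with h0 | hpos
  · have hz : ∀ j, w j = 0 := fun j =>
      (Finset.sum_eq_zero_iff_of_nonneg fun j _ => hw j).1 h0.symm j (Finset.mem_univ j)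
    exact ⟨σ (Classical.arbitrary ι), hσ _, by simp [hz]⟩
  · refine ⟨Finset.univ.centerMass w σ, (convex_convexHull ℝ _).centerMass_mem
      (fun j _ => hw j) hpos fun j _ => hσ j, ?_⟩
    rw [Finset.centerMass, smul_inv_smul₀ (ne_of_gt hpos)]

/-- If `ρ` is an affine combination of separable states, the total negative weight bounds its
robustness. -/
lemma robustness_le_sum_negPart {dA dB : ℕ} {ι : Type*} [Fintype ι] [Nonempty ι] (a : ι → ℝ)
    (σ : ι → Matrix (Fin dA × Fin dB) (Fin dA × Fin dB) ℂ) (hσ : ∀ j, σ j ∈ SEP dA dB)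
    (ha : ∑ j, a j = 1) :
    robustness dA dB (∑ j, a j • σ j) ≤ ∑ j, (a j)⁻ := by
  have hκ : 0 ≤ ∑ j, (a j)⁻ := Finset.sum_nonneg fun j _ => negPart_nonneg _
  obtain ⟨τp, hτp, hp⟩ := exists_mem_SEP_smul_eq_sum _ (fun j => posPart_nonneg (a j)) σ hσ
  obtain ⟨τn, hτn, hn⟩ := exists_mem_SEP_smul_eq_sum _ (fun j => negPart_nonneg (a j)) σ hσ
  have hsum : ∑ j, (a j)⁺ = 1 + ∑ j, (a j)⁻ := by
    rw [← ha, ← Finset.sum_add_distrib]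
    exact Finset.sum_congr rfl fun j _ => by linarith [posPart_sub_negPart (a j)]
  refine csInf_le ⟨0, fun s hs => hs.1⟩ ⟨hκ, τn, hτn, ?_⟩
  have hdec : ∑ j, a j • σ j + (∑ j, (a j)⁻) • τn = (1 + ∑ j, (a j)⁻) • τp := by
    rw [← hsum, hp, hn, ← Finset.sum_add_distrib]
    refine Finset.sum_congr rfl fun j _ => ?_
    rw [← add_smul]
    congr 1
    linarith [posPart_sub_negPart (a j)]
  rw [hdec, one_div, inv_smul_smul₀ (by positivity)]
  exact hτp

/-- If a density matrix `ρ` on `ℂ^{d_A} ⊗ ℂ^{d_B}` can be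
written as `ρ = Σ_j a_j σ_j` with `a_j ∈ ℝ` and `σ_j` separable states, then
`Σ_j |a_j| ≥ 1 + 2 R(ρ)`. -/
theorem robustness_lower_bounds_one_norm (dA dB : ℕ)
    (ρ : Matrix (Fin dA × Fin dB) (Fin dA × Fin dB) ℂ)
    (hρ : IsDensityMatrix ρ)
    (m : ℕ) (a : Fin m → ℝ)
    (σ : Fin m → Matrix (Fin dA × Fin dB) (Fin dA × Fin dB) ℂ)
    (hσ : ∀ j, σ j ∈ SEP dA dB)
    (hdecomp : ρ = ∑ j, a j • σ j) :
    1 + 2 * robustness dA dB ρ ≤ ∑ j, |a j| := by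
  have htr : ∑ j, a j = 1 := by
    have h := hρ.2
    rw [hdecomp, Matrix.trace_sum] at h
    simp only [Matrix.trace_smul, trace_eq_one_of_mem_SEP (hσ _), Complex.real_smul, mul_one] at h
    exact_mod_cast h
  -- An empty sum of coefficients would be `0`, not `1`.
  have : Nonempty (Fin m) := by
    by_contra hne
    rw [not_nonempty_iff] at hne
    simp at htr
  have hR := robustness_le_sum_negPart a σ hσ htr
  rw [← hdecomp] at hR
  have habs : ∑ j, |a j| = ∑ j, a j + 2 * ∑ j, (a j)⁻ := by
    rw [Finset.mul_sum, ← Finset.sum_add_distrib]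
    exact Finset.sum_congr rfl fun j _ => by
      linarith [posPart_sub_negPart (a j), posPart_add_negPart (a j)]
  linarith
end
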